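/- Let Σ_ext = (α,β,γ,μ₁,μ₂,ν₁,ν₂,σ₁) with σ₁ = μ₂ = ν₂ = 0, α,β,γ ∈ {π/4, 3π/4, 5π/4, 7π/4}, μ₁ = π/2 if α+γ is an integer multiple of π and μ₁ = 3π/2 otherwise, and ν₁ = 0 if α+β is an integer multiple of π and ν₁ = π otherwise. Then the gradient with respect to all eight parameters (α,β,γ,μ₁,ν₁,σ₁,μ₂,ν₂) of the mean phase synchronization fidelity ⟨F(Σ)⟩ = (4π)⁻² ∫₀^{2π}dφ₁ ∫₀^{2π}dφ₂ ∫₀^π dθ₁ sinθ₁ ∫₀^π dθ₂ sinθ₂ · F(|ψ(θ₁,φ₁)⟩⟨ψ(θ₁,φ₁)| ⊗ |ψ(θ₂,φ₂)⟩⟨ψ(θ₂,φ₂)|, U_g(Σ)) vanishes at Σ = Σ_ext: ∇⟨F⟩(Σ_ext) = 0. -/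

import Mathlib

/-!
The mean fidelity, as a function of any single parameter, is even about its value at `Σ_ext`; an even
function has vanishing derivative, so no differentiation under the integral is needed.

Pulling the Pauli observables back through the circuit (`heis_Uc`, `PSF_eq_kern`) writes the fidelity
as the cosine of the angle between two plane vectors whose entries are explicit polynomials in the
Bloch vectors `m`, `n` of the two input qubits. The mean is taken over both Bloch spheres, so it is
unchanged when both inputs are reflected in the xy-plane (`meanPSF_eq_of_zflip`) or both are turned by
`π` about the z-axis (`meanPSF_eq_of_zturn`).

* The turn reverses all transverse output components and keeps the longitudinal ones. Hence reversing
  the sign of `sin ν₁` and `sin ν₂` does not change the mean (`kern_zturn`), which is evenness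
  in `ν₁` and `ν₂`.
* Every extremal value `p` of `α`, `β`, `γ` is an odd multiple of `π / 4`, so `cos (p + s)` and
  `sin (p + s)` are `sin (p - s)` and `cos (p - s)` up to the common sign `sin (2 p)`. The reflection
  in the xy-plane therefore exchanges, up to signs, the transverse output vectors of the two qubits
  while replacing `s` by `-s` (`out_zflip`). The prescribed `μ₁` and `ν₁` are exactly those for which
  the remaining signs cancel. The angle between two vectors is symmetric and rotation invariant, so
  the mean is even in `α`, `β`, `γ`, `μ₁`, `μ₂` and `σ₁` (`kern_zflip`).
-/


open Matrix Complex Real Kronecker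
open scoped ComplexOrder

noncomputable section

/-- Pauli matrices -/
def pauliX : Matrix (Fin 2) (Fin 2) ℂ := !![0, 1; 1, 0]
def pauliY : Matrix (Fin 2) (Fin 2) ℂ := !![0, -Complex.I; Complex.I, 0]
def pauliZ : Matrix (Fin 2) (Fin 2) ℂ := !![1, 0; 0, -1]

/-- partial trace over the second qubit -/
def ptrace2 (ρ : Matrix (Fin 2 × Fin 2) (Fin 2 × Fin 2) ℂ) : Matrix (Fin 2) (Fin 2) ℂ :=
  fun i j => ∑ k : Fin 2, ρ (i, k) (j, k)

/-- partial trace over the first qubit -/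
def ptrace1 (ρ : Matrix (Fin 2 × Fin 2) (Fin 2 × Fin 2) ℂ) : Matrix (Fin 2) (Fin 2) ℂ :=
  fun i j => ∑ k : Fin 2, ρ (k, i) (k, j)

/-- Bloch vector of a single-qubit state -/
def bloch (τ : Matrix (Fin 2) (Fin 2) ℂ) : Fin 3 → ℝ :=
  ![(Matrix.trace (pauliX * τ)).re, (Matrix.trace (pauliY * τ)).re,
    (Matrix.trace (pauliZ * τ)).re]

/-- projection of the Bloch vector into the xy-plane -/
def mvec (τ : Matrix (Fin 2) (Fin 2) ℂ) : Fin 2 → ℝ :=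
  ![(Matrix.trace (pauliX * τ)).re, (Matrix.trace (pauliY * τ)).re]

def mdot (a b : Fin 2 → ℝ) : ℝ := a 0 * b 0 + a 1 * b 1
def mnorm (a : Fin 2 → ℝ) : ℝ := Real.sqrt (a 0 ^ 2 + a 1 ^ 2)

/-- quantum-phase fidelity between two single-qubit states -/
def phaseFid (τ₁ τ₂ : Matrix (Fin 2) (Fin 2) ℂ) : ℝ :=
  mdot (mvec τ₁) (mvec τ₂) / (mnorm (mvec τ₁) * mnorm (mvec τ₂))

/-- phase synchronization fidelity of a two-qubit state ρ under a unitary U -/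
def PSF (ρ U : Matrix (Fin 2 × Fin 2) (Fin 2 × Fin 2) ℂ) : ℝ :=
  phaseFid (ptrace2 (U * ρ * Uᴴ)) (ptrace1 (U * ρ * Uᴴ))

/-- pure qubit state |ψ(θ,φ)⟩ = cos(θ/2)|0⟩ + e^{iφ} sin(θ/2)|1⟩ -/
def ψ (θ φ : ℝ) : Fin 2 → ℂ :=
  ![(Real.cos (θ / 2) : ℂ), Complex.exp (Complex.I * φ) * (Real.sin (θ / 2) : ℂ)]

/-- density matrix |v⟩⟨v| of a vector -/
def dm (v : Fin 2 → ℂ) : Matrix (Fin 2) (Fin 2) ℂ := Matrix.vecMulVec v (star v)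

/-- CNOT with qubit 1 as control and qubit 2 as target -/
def CNOT12 : Matrix (Fin 2 × Fin 2) (Fin 2 × Fin 2) ℂ :=
  fun i j => if i.1 = j.1 ∧ i.2 = j.2 + j.1 then 1 else 0

/-- CNOT with qubit 2 as control and qubit 1 as target -/
def CNOT21 : Matrix (Fin 2 × Fin 2) (Fin 2 × Fin 2) ℂ :=
  fun i j => if i.1 = j.1 + j.2 ∧ i.2 = j.2 then 1 else 0

/-- R_y(β) = exp(−i(β/2)σ_y) -/
def Ry (β : ℝ) : Matrix (Fin 2) (Fin 2) ℂ :=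
  !![(Real.cos (β / 2) : ℂ), -(Real.sin (β / 2) : ℂ);
     (Real.sin (β / 2) : ℂ), (Real.cos (β / 2) : ℂ)]

/-- R_z(γ) = exp(−i(γ/2)σ_z) -/
def Rz (γ : ℝ) : Matrix (Fin 2) (Fin 2) ℂ :=
  !![Complex.exp (-(Complex.I * γ / 2)), 0; 0, Complex.exp (Complex.I * γ / 2)]

/-- rotation operator R_n̂(α) = exp(−i(α/2) n̂·σ) (closed form, n̂ a unit axis) -/
def Raxis (n : Fin 3 → ℝ) (α : ℝ) : Matrix (Fin 2) (Fin 2) ℂ :=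
  (Real.cos (α / 2) : ℂ) • (1 : Matrix (Fin 2) (Fin 2) ℂ) -
    (Complex.I * (Real.sin (α / 2) : ℂ)) •
      ((n 0 : ℂ) • pauliX + (n 1 : ℂ) • pauliY + (n 2 : ℂ) • pauliZ)

/-- the SO(3) rotation by angle α about the unit axis n̂ (Rodrigues formula) -/
def rot3 (n : Fin 3 → ℝ) (α : ℝ) (v : Fin 3 → ℝ) : Fin 3 → ℝ :=
  Real.cos α • v + Real.sin α • (crossProduct n v) +
    ((1 - Real.cos α) * (n ⬝ᵥ v)) • n

/-- the entangling circuit U_c(α,β,γ) -/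
def Uc (α β γ : ℝ) : Matrix (Fin 2 × Fin 2) (Fin 2 × Fin 2) ℂ :=
  CNOT21 * ((1 : Matrix (Fin 2) (Fin 2) ℂ) ⊗ₖ Ry β) * CNOT12 * (Rz γ ⊗ₖ Ry α) * CNOT21

/-- the general two-qubit circuit U_g -/
def Ug (α β γ μ₁ μ₂ ν₁ ν₂ σ₁ : ℝ) : Matrix (Fin 2 × Fin 2) (Fin 2 × Fin 2) ℂ :=
  ((Rz σ₁ * Ry ν₁ * Rz μ₁) ⊗ₖ (Ry ν₂ * Rz μ₂)) * Uc α β γ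


/-- mean PSF as a function of the eight circuit parameters
(α, β, γ, μ₁, ν₁, σ₁, μ₂, ν₂) -/
def meanPSF (v : Fin 8 → ℝ) : ℝ :=
  ((4 * π) ^ 2)⁻¹ *
    ∫ φ₁ in (0 : ℝ)..(2 * π), ∫ φ₂ in (0 : ℝ)..(2 * π),
      ∫ θ₁ in (0 : ℝ)..π, ∫ θ₂ in (0 : ℝ)..π,
        Real.sin θ₁ * Real.sin θ₂ *
          PSF (dm (ψ θ₁ φ₁) ⊗ₖ dm (ψ θ₂ φ₂))
            (Ug (v 0) (v 1) (v 2) (v 3) (v 6) (v 4) (v 7) (v 5))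

/-! ### Pulling observables back through the gates -/

/-- The Heisenberg-picture action `M ↦ Uᴴ M U` of a gate `U` on an observable `M`. -/
def heis {n : Type*} [Fintype n] (U M : Matrix n n ℂ) : Matrix n n ℂ := Uᴴ * M * U

section heisAlgebra
variable {n m : Type*} [Fintype n] [Fintype m]

lemma heis_mul (U V M : Matrix n n ℂ) : heis (U * V) M = heis V (heis U M) := by
  simp only [heis, conjTranspose_mul, Matrix.mul_assoc]

lemma heis_add (U M N : Matrix n n ℂ) : heis U (M + N) = heis U M + heis U N := by
  simp only [heis, Matrix.mul_add, Matrix.add_mul]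

lemma heis_neg (U M : Matrix n n ℂ) : heis U (-M) = -heis U M := by
  simp only [heis, Matrix.mul_neg, Matrix.neg_mul]

lemma heis_smul (U M : Matrix n n ℂ) (c : ℂ) : heis U (c • M) = c • heis U M := by
  simp only [heis, Matrix.mul_smul, Matrix.smul_mul]

lemma heis_kron (U M : Matrix n n ℂ) (V N : Matrix m m ℂ) :
    heis (U ⊗ₖ V) (M ⊗ₖ N) = heis U M ⊗ₖ heis V N := by
  simp only [heis, conjTranspose_kronecker, ← mul_kronecker_mul]

lemma heis_one_left [DecidableEq n] (M : Matrix n n ℂ) : heis 1 M = M := by simp [heis]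

lemma trace_heis (U M ρ : Matrix n n ℂ) :
    trace (M * (U * ρ * Uᴴ)) = trace (heis U M * ρ) := by
  rw [heis, Matrix.trace_mul_comm, Matrix.mul_assoc (U * ρ), Matrix.mul_assoc U,
    Matrix.trace_mul_comm, Matrix.mul_assoc, Matrix.trace_mul_comm]

end heisAlgebra

lemma Rz_eq (t : ℝ) : Rz t = !![(Real.cos (t / 2) : ℂ) - Real.sin (t / 2) * I, 0;
    0, (Real.cos (t / 2) : ℂ) + Real.sin (t / 2) * I] := by
  have h1 : cexp (-(I * t / 2)) = (Real.cos (t / 2) : ℂ) - Real.sin (t / 2) * I := by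
    rw [show -(I * (t : ℂ) / 2) = ((-(t / 2) : ℝ) : ℂ) * I by push_cast; ring, exp_mul_I,
      ← ofReal_cos, ← ofReal_sin, Real.cos_neg, Real.sin_neg]
    push_cast; ring
  have h2 : cexp (I * t / 2) = (Real.cos (t / 2) : ℂ) + Real.sin (t / 2) * I := by
    rw [show (I * (t : ℂ) / 2) = (((t / 2) : ℝ) : ℂ) * I by push_cast; ring, exp_mul_I,
      ← ofReal_cos, ← ofReal_sin]
  rw [Rz, h1, h2]

lemma half_cos (t : ℝ) : (Real.cos t : ℂ) = (Real.cos (t / 2) : ℂ) ^ 2 - (Real.sin (t / 2) : ℂ) ^ 2 := by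
  have h := Real.cos_two_mul' (t / 2)
  rw [mul_div_cancel₀ t two_ne_zero] at h
  rw [h]; push_cast; ring

lemma half_sin (t : ℝ) : (Real.sin t : ℂ) = 2 * Real.sin (t / 2) * Real.cos (t / 2) := by
  have h := Real.sin_two_mul (t / 2)
  rw [mul_div_cancel₀ t two_ne_zero] at h
  rw [h]; push_cast; ring

lemma half_one (t : ℝ) : (Real.cos (t / 2) : ℂ) ^ 2 + (Real.sin (t / 2) : ℂ) ^ 2 = 1 := by
  exact_mod_cast Real.cos_sq_add_sin_sq (t / 2)

lemma heis_Ry_one (t : ℝ) : heis (Ry t) 1 = 1 := by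
  have h := half_one t
  ext i j; fin_cases i <;> fin_cases j <;>
    simp [heis, Ry, Matrix.mul_apply, -ofReal_cos, -ofReal_sin] <;> grind

lemma heis_Ry_X (t : ℝ) :
    heis (Ry t) pauliX = (Real.cos t : ℂ) • pauliX + (Real.sin t : ℂ) • pauliZ := by
  rw [half_cos t, half_sin t]
  ext i j; fin_cases i <;> fin_cases j <;>
    simp [heis, Ry, pauliX, pauliZ, Matrix.mul_apply, -ofReal_cos, -ofReal_sin] <;> ring

lemma heis_Ry_Y (t : ℝ) : heis (Ry t) pauliY = pauliY := by
  have h := half_one t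
  ext i j; fin_cases i <;> fin_cases j <;>
    simp [heis, Ry, pauliY, Matrix.mul_apply, -ofReal_cos, -ofReal_sin] <;> grind

lemma heis_Ry_Z (t : ℝ) :
    heis (Ry t) pauliZ = (Real.cos t : ℂ) • pauliZ + (-(Real.sin t) : ℂ) • pauliX := by
  rw [half_cos t, half_sin t]
  ext i j; fin_cases i <;> fin_cases j <;>
    simp [heis, Ry, pauliX, pauliZ, Matrix.mul_apply, -ofReal_cos, -ofReal_sin] <;> ring

lemma heis_Rz_one (t : ℝ) : heis (Rz t) 1 = 1 := by
  have h := half_one t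
  rw [Rz_eq]
  ext i j; fin_cases i <;> fin_cases j <;>
    simp [heis, Matrix.mul_apply, -ofReal_cos, -ofReal_sin] <;> grind [I_sq]

lemma heis_Rz_X (t : ℝ) :
    heis (Rz t) pauliX = (Real.cos t : ℂ) • pauliX + (-(Real.sin t) : ℂ) • pauliY := by
  rw [half_cos t, half_sin t, Rz_eq]
  ext i j; fin_cases i <;> fin_cases j <;>
    simp [heis, pauliX, pauliY, Matrix.mul_apply, -ofReal_cos, -ofReal_sin] <;> grind [I_sq]

lemma heis_Rz_Y (t : ℝ) :
    heis (Rz t) pauliY = (Real.cos t : ℂ) • pauliY + (Real.sin t : ℂ) • pauliX := by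
  rw [half_cos t, half_sin t, Rz_eq]
  ext i j; fin_cases i <;> fin_cases j <;>
    simp [heis, pauliX, pauliY, Matrix.mul_apply, -ofReal_cos, -ofReal_sin] <;> grind [I_sq]

lemma heis_Rz_Z (t : ℝ) : heis (Rz t) pauliZ = pauliZ := by
  have h := half_one t
  rw [Rz_eq]
  ext i j; fin_cases i <;> fin_cases j <;>
    simp [heis, pauliZ, Matrix.mul_apply, -ofReal_cos, -ofReal_sin] <;> grind [I_sq]

set_option maxHeartbeats 2000000 in
/-- Action of `CNOT21` on the Pauli words that occur when an output spin component is pulled back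
through `Uc`. -/
lemma heis_CNOT21 :
    heis CNOT21 (pauliX ⊗ₖ (1 : Matrix (Fin 2) (Fin 2) ℂ)) = pauliX ⊗ₖ (1 : Matrix (Fin 2) (Fin 2) ℂ) ∧
    heis CNOT21 (pauliY ⊗ₖ (1 : Matrix (Fin 2) (Fin 2) ℂ)) = pauliY ⊗ₖ pauliZ ∧
    heis CNOT21 (pauliZ ⊗ₖ (1 : Matrix (Fin 2) (Fin 2) ℂ)) = pauliZ ⊗ₖ pauliZ ∧
    heis CNOT21 ((1 : Matrix (Fin 2) (Fin 2) ℂ) ⊗ₖ pauliX) = pauliX ⊗ₖ pauliX ∧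
    heis CNOT21 ((1 : Matrix (Fin 2) (Fin 2) ℂ) ⊗ₖ pauliY) = pauliX ⊗ₖ pauliY ∧
    heis CNOT21 ((1 : Matrix (Fin 2) (Fin 2) ℂ) ⊗ₖ pauliZ) = (1 : Matrix (Fin 2) (Fin 2) ℂ) ⊗ₖ pauliZ ∧
    heis CNOT21 (pauliX ⊗ₖ pauliX) = (1 : Matrix (Fin 2) (Fin 2) ℂ) ⊗ₖ pauliX ∧
    heis CNOT21 (pauliX ⊗ₖ pauliZ) = pauliX ⊗ₖ pauliZ ∧
    heis CNOT21 (pauliY ⊗ₖ pauliX) = pauliZ ⊗ₖ pauliY ∧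
    heis CNOT21 (pauliY ⊗ₖ pauliZ) = pauliY ⊗ₖ (1 : Matrix (Fin 2) (Fin 2) ℂ) ∧
    heis CNOT21 (pauliX ⊗ₖ pauliY) = (1 : Matrix (Fin 2) (Fin 2) ℂ) ⊗ₖ pauliY ∧
    heis CNOT21 (pauliY ⊗ₖ pauliY) = -(pauliZ ⊗ₖ pauliX) ∧
    heis CNOT21 (pauliZ ⊗ₖ pauliX) = -(pauliY ⊗ₖ pauliY) ∧
    heis CNOT21 (pauliZ ⊗ₖ pauliZ) = pauliZ ⊗ₖ (1 : Matrix (Fin 2) (Fin 2) ℂ) := by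
  refine ⟨?_, ?_, ?_, ?_, ?_, ?_, ?_, ?_, ?_, ?_, ?_, ?_, ?_, ?_⟩
  all_goals
    ext ⟨i, i'⟩ ⟨j, j'⟩
    fin_cases i <;> fin_cases i' <;> fin_cases j <;> fin_cases j' <;>
      simp [heis, CNOT21, pauliX, pauliY, pauliZ, Matrix.mul_apply, Fintype.sum_prod_type,
        Matrix.one_apply]

set_option maxHeartbeats 2000000 in
/-- Action of `CNOT12` on the Pauli words that occur when an output spin component is pulled back
through `Uc`. -/
lemma heis_CNOT12 :
    heis CNOT12 (pauliX ⊗ₖ (1 : Matrix (Fin 2) (Fin 2) ℂ)) = pauliX ⊗ₖ pauliX ∧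
    heis CNOT12 (pauliY ⊗ₖ pauliZ) = pauliX ⊗ₖ pauliY ∧
    heis CNOT12 (pauliY ⊗ₖ pauliX) = pauliY ⊗ₖ (1 : Matrix (Fin 2) (Fin 2) ℂ) ∧
    heis CNOT12 (pauliZ ⊗ₖ pauliZ) = (1 : Matrix (Fin 2) (Fin 2) ℂ) ⊗ₖ pauliZ ∧
    heis CNOT12 (pauliZ ⊗ₖ pauliX) = pauliZ ⊗ₖ pauliX ∧
    heis CNOT12 (pauliX ⊗ₖ pauliX) = pauliX ⊗ₖ (1 : Matrix (Fin 2) (Fin 2) ℂ) ∧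
    heis CNOT12 (pauliX ⊗ₖ pauliZ) = -(pauliY ⊗ₖ pauliY) ∧
    heis CNOT12 (pauliX ⊗ₖ pauliY) = pauliY ⊗ₖ pauliZ ∧
    heis CNOT12 ((1 : Matrix (Fin 2) (Fin 2) ℂ) ⊗ₖ pauliZ) = pauliZ ⊗ₖ pauliZ ∧
    heis CNOT12 ((1 : Matrix (Fin 2) (Fin 2) ℂ) ⊗ₖ pauliX) = (1 : Matrix (Fin 2) (Fin 2) ℂ) ⊗ₖ pauliX := by
  refine ⟨?_, ?_, ?_, ?_, ?_, ?_, ?_, ?_, ?_, ?_⟩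
  all_goals
    ext ⟨i, i'⟩ ⟨j, j'⟩
    fin_cases i <;> fin_cases i' <;> fin_cases j <;> fin_cases j' <;>
      simp [heis, CNOT12, pauliX, pauliY, pauliZ, Matrix.mul_apply, Fintype.sum_prod_type,
        Matrix.one_apply]

lemma trace_word (a b P Q : Matrix (Fin 2) (Fin 2) ℂ) :
    trace ((P ⊗ₖ Q) * (a ⊗ₖ b)) = trace (P * a) * trace (Q * b) := by
  rw [← mul_kronecker_mul, trace_kronecker]

/-! ### Output Bloch vectors -/

/-- The x-component of the Bloch vector of the first qubit after `Uc α β γ` acts on the product state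
with Bloch vectors `m`, `n`. -/
def outX1 (α β γ : ℝ) (m n : Fin 3 → ℝ) : ℝ :=
  Real.cos γ * Real.cos α * n 0 + Real.cos γ * Real.sin α * (m 0 * n 2)
    - Real.sin γ * Real.cos α * (m 2 * n 1) - Real.sin γ * Real.sin α * m 1

/-- The y-component of the Bloch vector of the first qubit after `Uc α β γ` acts on the product state
with Bloch vectors `m`, `n`. -/
def outY1 (α β γ : ℝ) (m n : Fin 3 → ℝ) : ℝ :=
  Real.cos β * Real.cos γ * n 1 + Real.cos β * Real.sin γ * (m 2 * n 0)
    - Real.sin β * Real.cos γ * (m 1 * n 2) - Real.sin β * Real.sin γ * m 0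

/-- The z-component of the Bloch vector of the first qubit after `Uc α β γ` acts on the product state
with Bloch vectors `m`, `n`. -/
def outZ1 (α β γ : ℝ) (m n : Fin 3 → ℝ) : ℝ :=
  Real.cos β * Real.cos α * n 2 - Real.cos β * Real.sin α * (m 0 * n 0)
    + Real.sin β * Real.cos α * (m 1 * n 1) - Real.sin β * Real.sin α * m 2

/-- The x-component of the Bloch vector of the second qubit after `Uc α β γ` acts on the product state
with Bloch vectors `m`, `n`. -/
def outX2 (α β γ : ℝ) (m n : Fin 3 → ℝ) : ℝ :=
  Real.cos β * Real.cos γ * m 0 - Real.cos β * Real.sin γ * (m 1 * n 2)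
    + Real.sin β * Real.cos γ * (m 2 * n 0) - Real.sin β * Real.sin γ * n 1

/-- The y-component of the Bloch vector of the second qubit after `Uc α β γ` acts on the product state
with Bloch vectors `m`, `n`. -/
def outY2 (α β γ : ℝ) (m n : Fin 3 → ℝ) : ℝ :=
  Real.cos γ * Real.cos α * m 1 + Real.sin γ * Real.cos α * (m 0 * n 2)
    - Real.cos γ * Real.sin α * (m 2 * n 1) - Real.sin γ * Real.sin α * n 0

/-- The z-component of the Bloch vector of the second qubit after `Uc α β γ` acts on the product state
with Bloch vectors `m`, `n`. -/
def outZ2 (α β γ : ℝ) (m n : Fin 3 → ℝ) : ℝ :=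
  Real.cos β * Real.cos α * m 2 + Real.cos β * Real.sin α * (m 1 * n 1)
    - Real.sin β * Real.cos α * (m 0 * n 0) - Real.sin β * Real.sin α * n 2

/-- `a` is the (trace-one) density matrix with Bloch vector `m`. -/
structure HasBloch (a : Matrix (Fin 2) (Fin 2) ℂ) (m : Fin 3 → ℝ) : Prop where
  tr : trace a = 1
  x : trace (pauliX * a) = m 0
  y : trace (pauliY * a) = m 1
  z : trace (pauliZ * a) = m 2

set_option maxHeartbeats 1000000 in
lemma heis_Uc (α β γ : ℝ) {m n : Fin 3 → ℝ} {a b : Matrix (Fin 2) (Fin 2) ℂ}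
    (ha : HasBloch a m) (hb : HasBloch b n) :
    trace (heis (Uc α β γ) (pauliX ⊗ₖ (1 : Matrix (Fin 2) (Fin 2) ℂ)) * (a ⊗ₖ b)) = outX1 α β γ m n ∧
    trace (heis (Uc α β γ) (pauliY ⊗ₖ (1 : Matrix (Fin 2) (Fin 2) ℂ)) * (a ⊗ₖ b)) = outY1 α β γ m n ∧
    trace (heis (Uc α β γ) (pauliZ ⊗ₖ (1 : Matrix (Fin 2) (Fin 2) ℂ)) * (a ⊗ₖ b)) = outZ1 α β γ m n ∧
    trace (heis (Uc α β γ) ((1 : Matrix (Fin 2) (Fin 2) ℂ) ⊗ₖ pauliX) * (a ⊗ₖ b)) = outX2 α β γ m n ∧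
    trace (heis (Uc α β γ) ((1 : Matrix (Fin 2) (Fin 2) ℂ) ⊗ₖ pauliY) * (a ⊗ₖ b)) = outY2 α β γ m n ∧
    trace (heis (Uc α β γ) ((1 : Matrix (Fin 2) (Fin 2) ℂ) ⊗ₖ pauliZ) * (a ⊗ₖ b)) = outZ2 α β γ m n := by
  refine ⟨?_, ?_, ?_, ?_, ?_, ?_⟩
  all_goals
    simp only [Uc, heis_mul, heis_add, heis_neg, heis_smul, heis_kron, heis_one_left, heis_Ry_one,
      heis_Ry_X, heis_Ry_Y, heis_Ry_Z, heis_Rz_one, heis_Rz_X, heis_Rz_Y, heis_Rz_Z,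
      add_kronecker, smul_kronecker, kronecker_add, kronecker_smul, heis_CNOT21, heis_CNOT12,
      Matrix.add_mul, Matrix.neg_mul, Matrix.smul_mul, Matrix.trace_add, Matrix.trace_neg,
      Matrix.trace_smul, smul_eq_mul, trace_word, Matrix.one_mul, ha.tr, ha.x, ha.y, ha.z,
      hb.tr, hb.x, hb.y, hb.z, outX1, outY1, outZ1, outX2, outY2, outZ2]
    push_cast
    ring

lemma trace_mul_ptrace2 (P : Matrix (Fin 2) (Fin 2) ℂ)
    (τ : Matrix (Fin 2 × Fin 2) (Fin 2 × Fin 2) ℂ) :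
    trace (P * ptrace2 τ) = trace ((P ⊗ₖ (1 : Matrix (Fin 2) (Fin 2) ℂ)) * τ) := by
  simp [trace, Matrix.mul_apply, ptrace2, Fintype.sum_prod_type, Matrix.one_apply]
  ring

lemma trace_mul_ptrace1 (P : Matrix (Fin 2) (Fin 2) ℂ)
    (τ : Matrix (Fin 2 × Fin 2) (Fin 2 × Fin 2) ℂ) :
    trace (P * ptrace1 τ) = trace (((1 : Matrix (Fin 2) (Fin 2) ℂ) ⊗ₖ P) * τ) := by
  simp [trace, Matrix.mul_apply, ptrace1, Fintype.sum_prod_type, Matrix.one_apply]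
  ring

/-- The x-component of the Bloch vector `(x, y, z)` after `Rz σ * Ry ν * Rz μ`. -/
def locX (σ ν μ x y z : ℝ) : ℝ :=
  Real.cos σ * (Real.cos ν * (Real.cos μ * x - Real.sin μ * y) + Real.sin ν * z)
    - Real.sin σ * (Real.cos μ * y + Real.sin μ * x)

/-- The y-component of the Bloch vector `(x, y, z)` after `Rz σ * Ry ν * Rz μ`. -/
def locY (σ ν μ x y z : ℝ) : ℝ :=
  Real.cos σ * (Real.cos μ * y + Real.sin μ * x)
    + Real.sin σ * (Real.cos ν * (Real.cos μ * x - Real.sin μ * y) + Real.sin ν * z)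

/-- The cosine of the angle between the plane vectors `(a, b)` and `(c, d)`; it is `0` if one of them
vanishes. -/
def cosAngle (a b c d : ℝ) : ℝ :=
  (a * c + b * d) / (Real.sqrt (a ^ 2 + b ^ 2) * Real.sqrt (c ^ 2 + d ^ 2))

/-- The phase synchronization fidelity of `Ug` as a function of the two input Bloch vectors. -/
def kern (α β γ μ₁ μ₂ ν₁ ν₂ σ₁ : ℝ) (m n : Fin 3 → ℝ) : ℝ :=
  cosAngle
    (locX σ₁ ν₁ μ₁ (outX1 α β γ m n) (outY1 α β γ m n) (outZ1 α β γ m n))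
    (locY σ₁ ν₁ μ₁ (outX1 α β γ m n) (outY1 α β γ m n) (outZ1 α β γ m n))
    (locX 0 ν₂ μ₂ (outX2 α β γ m n) (outY2 α β γ m n) (outZ2 α β γ m n))
    (locY 0 ν₂ μ₂ (outX2 α β γ m n) (outY2 α β γ m n) (outZ2 α β γ m n))

lemma PSF_eq_kern (α β γ μ₁ μ₂ ν₁ ν₂ σ₁ : ℝ) {m n : Fin 3 → ℝ} {a b : Matrix (Fin 2) (Fin 2) ℂ}
    (ha : HasBloch a m) (hb : HasBloch b n) :
    PSF (a ⊗ₖ b) (Ug α β γ μ₁ μ₂ ν₁ ν₂ σ₁) = kern α β γ μ₁ μ₂ ν₁ ν₂ σ₁ m n := by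
  have H := heis_Uc α β γ ha hb
  have key : ∀ (P : Matrix (Fin 2 × Fin 2) (Fin 2 × Fin 2) ℂ) (x y : ℝ), x = y →
      trace (P * (Ug α β γ μ₁ μ₂ ν₁ ν₂ σ₁ * (a ⊗ₖ b) * (Ug α β γ μ₁ μ₂ ν₁ ν₂ σ₁)ᴴ)) = (x : ℂ) →
      (trace (P * (Ug α β γ μ₁ μ₂ ν₁ ν₂ σ₁ * (a ⊗ₖ b) * (Ug α β γ μ₁ μ₂ ν₁ ν₂ σ₁)ᴴ))).re = y := by
    intro P x y h1 h2
    rw [h2, h1, ofReal_re]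
  simp only [PSF, phaseFid, mdot, mnorm, mvec, kern, cosAngle, trace_mul_ptrace1,
    trace_mul_ptrace2, Matrix.cons_val_zero, Matrix.cons_val_one]
  rw [key _ _ _ rfl (?_ : _ = ((locX σ₁ ν₁ μ₁ (outX1 α β γ m n) (outY1 α β γ m n)
      (outZ1 α β γ m n) : ℝ) : ℂ)),
    key _ _ _ rfl (?_ : _ = ((locX 0 ν₂ μ₂ (outX2 α β γ m n) (outY2 α β γ m n)
      (outZ2 α β γ m n) : ℝ) : ℂ)),
    key _ _ _ rfl (?_ : _ = ((locY σ₁ ν₁ μ₁ (outX1 α β γ m n) (outY1 α β γ m n)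
      (outZ1 α β γ m n) : ℝ) : ℂ)),
    key _ _ _ rfl (?_ : _ = ((locY 0 ν₂ μ₂ (outX2 α β γ m n) (outY2 α β γ m n)
      (outZ2 α β γ m n) : ℝ) : ℂ))]
  all_goals
    rw [trace_heis, Ug]
    simp only [heis_mul, heis_add, heis_neg, heis_smul, heis_kron, heis_Ry_one,
      heis_Ry_X, heis_Ry_Y, heis_Ry_Z, heis_Rz_one, heis_Rz_X, heis_Rz_Y, heis_Rz_Z,
      add_kronecker, smul_kronecker, kronecker_add, kronecker_smul,
      Matrix.add_mul, Matrix.neg_mul, Matrix.smul_mul, Matrix.trace_add, Matrix.trace_neg,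
      Matrix.trace_smul, smul_eq_mul, H, locX, locY, Real.cos_zero, Real.sin_zero]
    push_cast
    ring

/-- The point of the unit sphere with polar angle `θ` and azimuth `φ`. -/
def sph (θ φ : ℝ) : Fin 3 → ℝ :=
  ![Real.sin θ * Real.cos φ, Real.sin θ * Real.sin φ, Real.cos θ]

lemma hasBloch_dm (θ φ : ℝ) : HasBloch (dm (ψ θ φ)) (sph θ φ) := by
  have e1 : cexp (I * φ) = (Real.cos φ : ℂ) + Real.sin φ * I := by
    rw [mul_comm, exp_mul_I, ← ofReal_cos, ← ofReal_sin]
  have h1 := half_one θ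
  have h2 : (Real.cos φ : ℂ) ^ 2 + (Real.sin φ : ℂ) ^ 2 = 1 := by
    exact_mod_cast Real.cos_sq_add_sin_sq φ
  have hI := I_sq
  have e2 : dm (ψ θ φ) =
      !![(Real.cos (θ / 2) : ℂ) ^ 2,
        Real.cos (θ / 2) * Real.sin (θ / 2) * (Real.cos φ - Real.sin φ * I);
        Real.cos (θ / 2) * Real.sin (θ / 2) * (Real.cos φ + Real.sin φ * I),
        (Real.sin (θ / 2) : ℂ) ^ 2] := by
    ext i j
    fin_cases i <;> fin_cases j <;>
      simp [dm, ψ, e1, vecMulVec_apply, -ofReal_cos, -ofReal_sin] <;> grind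
  rw [e2]
  constructor
  all_goals
    simp [sph, trace, pauliX, pauliY, pauliZ, Matrix.mul_apply,
      -ofReal_cos, -ofReal_sin, half_cos θ, half_sin θ]
    generalize (Real.cos (θ / 2) : ℂ) = c at *
    generalize (Real.sin (θ / 2) : ℂ) = s at *
    grind

lemma meanPSF_eq (v : Fin 8 → ℝ) : meanPSF v = ((4 * π) ^ 2)⁻¹ *
    ∫ φ₁ in (0 : ℝ)..(2 * π), ∫ φ₂ in (0 : ℝ)..(2 * π),
      ∫ θ₁ in (0 : ℝ)..π, ∫ θ₂ in (0 : ℝ)..π, Real.sin θ₁ * Real.sin θ₂ *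
        kern (v 0) (v 1) (v 2) (v 3) (v 6) (v 4) (v 7) (v 5) (sph θ₁ φ₁) (sph θ₂ φ₂) := by
  simp only [meanPSF, PSF_eq_kern _ _ _ _ _ _ _ _ (hasBloch_dm _ _) (hasBloch_dm _ _)]

/-! ### Symmetries of the mean over the spheres -/

/-- Reflection of a Bloch vector in the xy-plane. -/
def zflip (m : Fin 3 → ℝ) : Fin 3 → ℝ := ![m 0, m 1, -m 2]

/-- Rotation of a Bloch vector by `π` about the z-axis. -/
def zturn (m : Fin 3 → ℝ) : Fin 3 → ℝ := ![-m 0, -m 1, m 2]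

lemma sph_pi_sub (θ φ : ℝ) : sph (π - θ) φ = zflip (sph θ φ) := by
  ext i; fin_cases i <;> simp [sph, zflip]

lemma sph_add_pi (θ φ : ℝ) : sph θ (φ + π) = zturn (sph θ φ) := by
  ext i; fin_cases i <;> simp [sph, zturn]

lemma sph_add_two_pi (θ φ : ℝ) : sph θ (φ + 2 * π) = sph θ φ := by
  ext i; fin_cases i <;> simp [sph]

/-- The mean over the two spheres is invariant under reflecting both of them in the xy-plane. -/
lemma meanPSF_eq_of_zflip {v w : Fin 8 → ℝ}
    (h : ∀ m n, kern (v 0) (v 1) (v 2) (v 3) (v 6) (v 4) (v 7) (v 5) (zflip m) (zflip n)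
      = kern (w 0) (w 1) (w 2) (w 3) (w 6) (w 4) (w 7) (w 5) m n) :
    meanPSF v = meanPSF w := by
  have refl_int : ∀ f : ℝ → ℝ, ∫ θ in (0 : ℝ)..π, f θ = ∫ θ in (0 : ℝ)..π, f (π - θ) := by
    intro f
    rw [intervalIntegral.integral_comp_sub_left f π, sub_self, sub_zero]
  rw [meanPSF_eq, meanPSF_eq]
  congr 1
  refine intervalIntegral.integral_congr fun φ₁ _ => ?_
  refine intervalIntegral.integral_congr fun φ₂ _ => ?_
  rw [refl_int]
  refine intervalIntegral.integral_congr fun θ₁ _ => ?_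
  rw [refl_int]
  refine intervalIntegral.integral_congr fun θ₂ _ => ?_
  simp only [sph_pi_sub, h, Real.sin_pi_sub]

/-- The mean over the two spheres is invariant under turning both of them by `π` about the
z-axis. -/
lemma meanPSF_eq_of_zturn {v w : Fin 8 → ℝ}
    (h : ∀ m n, kern (v 0) (v 1) (v 2) (v 3) (v 6) (v 4) (v 7) (v 5) (zturn m) (zturn n)
      = kern (w 0) (w 1) (w 2) (w 3) (w 6) (w 4) (w 7) (w 5) m n) :
    meanPSF v = meanPSF w := by
  have shift_int : ∀ f : ℝ → ℝ, (∀ x, f (x + 2 * π) = f x) →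
      ∫ φ in (0 : ℝ)..(2 * π), f φ = ∫ φ in (0 : ℝ)..(2 * π), f (φ + π) := by
    intro f hf
    have hp : Function.Periodic f (2 * π) := hf
    rw [intervalIntegral.integral_comp_add_right f π, zero_add, add_comm (2 * π)]
    simpa using hp.intervalIntegral_add_eq 0 π
  rw [meanPSF_eq, meanPSF_eq]
  congr 1
  rw [shift_int _ (fun x => by simp only [sph_add_two_pi])]
  refine intervalIntegral.integral_congr fun φ₁ _ => ?_
  rw [shift_int _ (fun x => by simp only [sph_add_two_pi])]
  refine intervalIntegral.integral_congr fun φ₂ _ => ?_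
  simp only [sph_add_pi, h]

/-! ### Symmetries of the fidelity -/

lemma cosAngle_neg (a b c d : ℝ) : cosAngle (-a) (-b) (-c) (-d) = cosAngle a b c d := by
  simp [cosAngle]

/-- The angle between two vectors does not depend on their order, so it is enough to compare the
inner products and the crosswise norms. -/
lemma cosAngle_swap {a b c d a' b' c' d' : ℝ} (h : a * c + b * d = a' * c' + b' * d')
    (h₁ : a ^ 2 + b ^ 2 = c' ^ 2 + d' ^ 2) (h₂ : c ^ 2 + d ^ 2 = a' ^ 2 + b' ^ 2) :
    cosAngle a b c d = cosAngle a' b' c' d' := by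
  rw [cosAngle, cosAngle, h, h₁, h₂, mul_comm (Real.sqrt (c' ^ 2 + d' ^ 2))]

/-- Under simultaneous turns of the inputs by `π` about z, all transverse outputs change sign and
the longitudinal ones do not, so reversing the sign of both `sin ν₁` and `sin ν₂` is
compensated. -/
lemma kern_zturn (α β γ μ₁ μ₂ σ₁ : ℝ) {ν₁ ν₂ ν₁' ν₂' : ℝ}
    (hc₁ : Real.cos ν₁ = Real.cos ν₁') (hs₁ : Real.sin ν₁ = -Real.sin ν₁')
    (hc₂ : Real.cos ν₂ = Real.cos ν₂') (hs₂ : Real.sin ν₂ = -Real.sin ν₂') (m n : Fin 3 → ℝ) :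
    kern α β γ μ₁ μ₂ ν₁ ν₂ σ₁ (zturn m) (zturn n) = kern α β γ μ₁ μ₂ ν₁' ν₂' σ₁ m n := by
  rw [kern, kern, ← cosAngle_neg]
  congr 1 <;>
  · simp only [locX, locY, hc₁, hs₁, hc₂, hs₂, outX1, outY1, outZ1, outX2, outY2, outZ2, zturn,
      Matrix.cons_val]
    ring

/-- The angles `p` and `p'` lie symmetrically about an odd multiple of `π / 4`; the sign `e` is the
sine of the doubled centre. -/
structure Mirror (e p p' : ℝ) : Prop where
  sq : e ^ 2 = 1
  cos : Real.cos p = e * Real.sin p'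
  sin : Real.sin p = e * Real.cos p'

/-- Reflecting both inputs in the xy-plane exchanges the transverse outputs of the two qubits up
to sign, provided `α`, `β`, `γ` are replaced by their mirror images. -/
lemma out_zflip {α β γ α' β' γ' a b c : ℝ} (hα : Mirror a α α') (hβ : Mirror b β β')
    (hγ : Mirror c γ γ') (m n : Fin 3 → ℝ) :
    outX1 α β γ (zflip m) (zflip n) = -(a * c) * outY2 α' β' γ' m n ∧
    outY1 α β γ (zflip m) (zflip n) = -(b * c) * outX2 α' β' γ' m n ∧
    outX2 α β γ (zflip m) (zflip n) = -(b * c) * outY1 α' β' γ' m n ∧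
    outY2 α β γ (zflip m) (zflip n) = -(a * c) * outX1 α' β' γ' m n := by
  refine ⟨?_, ?_, ?_, ?_⟩ <;>
  · simp only [outX1, outY1, outX2, outY2, hα.cos, hα.sin, hβ.cos, hβ.sin, hγ.cos, hγ.sin, zflip,
      Matrix.cons_val]
    ring

/-- The combined reflection symmetry: reflecting both inputs in the xy-plane and mirroring
`α`, `β`, `γ`, `μ₁`, `μ₂`, `σ₁` about their extremal values exchanges the two output vectors up to a
common rotation. -/
lemma kern_zflip {α β γ α' β' γ' a b c μ ν : ℝ} (hα : Mirror a α α') (hβ : Mirror b β β')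
    (hγ : Mirror c γ γ') (hμc : Real.cos μ = 0) (hμs : Real.sin μ = -(a * c))
    (hνs : Real.sin ν = 0) (hνc : Real.cos ν = -(a * b)) (r s t : ℝ) (m n : Fin 3 → ℝ) :
    kern α β γ (μ + r) s ν 0 t (zflip m) (zflip n)
      = kern α' β' γ' (μ - r) (-s) ν 0 (-t) m n := by
  obtain ⟨h1, h2, h3, h4⟩ := out_zflip hα hβ hγ m n
  have ha : a = 1 ∨ a = -1 := sq_eq_one_iff.mp hα.sq
  have hb : b = 1 ∨ b = -1 := sq_eq_one_iff.mp hβ.sq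
  have hc : c = 1 ∨ c = -1 := sq_eq_one_iff.mp hγ.sq
  have hr := Real.sin_sq_add_cos_sq r
  have hs := Real.sin_sq_add_cos_sq s
  have ht := Real.sin_sq_add_cos_sq t
  simp only [kern, locX, locY, h1, h2, h3, h4, hνs, hνc, Real.cos_add, Real.sin_add, Real.cos_sub,
    Real.sin_sub, hμc, hμs, Real.cos_neg, Real.sin_neg, Real.cos_zero, Real.sin_zero]
  clear h1 h2 h3 h4 hα hβ hγ hμc hμs hνs hνc
  generalize outX1 α' β' γ' m n = x
  generalize outY1 α' β' γ' m n = y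
  generalize outX2 α' β' γ' m n = z
  generalize outY2 α' β' γ' m n = w
  apply cosAngle_swap <;>
    rcases ha with rfl | rfl <;> rcases hb with rfl | rfl <;> rcases hc with rfl | rfl <;>
    grind

/-! ### The extremal angles -/

lemma mirror_of_mem {p : ℝ} (hp : p ∈ ({π / 4, 3 * π / 4, 5 * π / 4, 7 * π / 4} : Set ℝ)) :
    ∃ e, ∀ s, Mirror e (p + s) (p - s) := by
  have hc : Real.cos (2 * p) = 0 := by
    rw [Real.cos_eq_zero_iff]
    rcases hp with rfl | rfl | rfl | rfl
    · exact ⟨0, by push_cast; ring⟩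
    · exact ⟨1, by push_cast; ring⟩
    · exact ⟨2, by push_cast; ring⟩
    · exact ⟨3, by push_cast; ring⟩
  refine ⟨Real.sin (2 * p), fun s => ⟨?_, ?_, ?_⟩⟩
  · have := Real.sin_sq_add_cos_sq (2 * p)
    rw [hc] at this
    linarith
  · rw [show p + s = 2 * p - (p - s) by ring, Real.cos_sub, hc]; ring
  · rw [show p + s = 2 * p - (p - s) by ring, Real.sin_sub, hc]; ring

lemma pos_of_mem {p : ℝ} (hp : p ∈ ({π / 4, 3 * π / 4, 5 * π / 4, 7 * π / 4} : Set ℝ)) :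
    0 < p := by
  rcases hp with rfl | rfl | rfl | rfl <;> positivity

/-- The sign criterion deciding which branch of the definition of `μ₁` and `ν₁` applies. -/
lemma add_eq_nat_mul_pi_iff {p q e f : ℝ} (hp : 0 < p) (hq : 0 < q) (he : Mirror e p p)
    (hf : Mirror f q q) : (∃ k : ℕ, p + q = k * π) ↔ e * f = -1 := by
  have hsp : Real.sin p ≠ 0 := by
    intro h
    have := Real.sin_sq_add_cos_sq p
    rw [he.cos, h] at this
    norm_num at this
  have hsq : Real.sin q ≠ 0 := by
    intro h
    have := Real.sin_sq_add_cos_sq q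
    rw [hf.cos, h] at this
    norm_num at this
  have key : Real.sin (p + q) = (e + f) * (Real.sin p * Real.sin q) := by
    rw [Real.sin_add, he.cos, hf.cos]; ring
  have he2 := he.sq
  constructor
  · rintro ⟨k, hk⟩
    rw [hk, Real.sin_nat_mul_pi] at key
    have : e + f = 0 := by
      rcases mul_eq_zero.mp key.symm with h | h
      · exact h
      · exact absurd h (mul_ne_zero hsp hsq)
    rw [show f = -e by linarith]
    linarith
  · intro h
    have hef : e + f = 0 := by linear_combination e * h - f * he2
    rw [hef, zero_mul, Real.sin_eq_zero_iff] at key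
    obtain ⟨k, hk⟩ := key
    have hk0 : 0 ≤ k := by
      have : (0 : ℝ) < k * π := by rw [hk]; linarith
      exact_mod_cast ((mul_pos_iff_of_pos_right Real.pi_pos).mp this).le
    lift k to ℕ using hk0
    exact ⟨k, by rw [← hk]; norm_num⟩

lemma mul_eq_one_of_sq {e f : ℝ} (he : e ^ 2 = 1) (hf : f ^ 2 = 1) (h : e * f ≠ -1) : e * f = 1 := by
  have : (e * f) ^ 2 = 1 := by rw [mul_pow, he, hf, one_mul]
  rcases sq_eq_one_iff.mp this with h' | h'
  · exact h'
  · exact absurd h' h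

/-- A function that is even about `p` has derivative `0` at `p`. If it is not differentiable
there, the value `0` is the default one. -/
lemma deriv_eq_zero_of_even {f : ℝ → ℝ} {p : ℝ} (h : ∀ s, f (p + s) = f (p - s)) :
    deriv f p = 0 := by
  have hf : (fun x => f (2 * p - x)) = f := by
    ext x
    have := h (p - x)
    rw [show p + (p - x) = 2 * p - x by ring, sub_sub_cancel] at this
    exact this
  have := deriv_comp_const_sub (f := f) (a := 2 * p) (x := p)
  rw [hf, show 2 * p - p = p by ring] at this
  linarith

/-- at the extremal parameter tuples Σ_ext the gradient of the
mean PSF with respect to all eight angles vanishes. -/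
theorem mean_psf_gradient_vanishes (α β γ μ₁ ν₁ : ℝ)
    (hα : α ∈ ({π / 4, 3 * π / 4, 5 * π / 4, 7 * π / 4} : Set ℝ))
    (hβ : β ∈ ({π / 4, 3 * π / 4, 5 * π / 4, 7 * π / 4} : Set ℝ))
    (hγ : γ ∈ ({π / 4, 3 * π / 4, 5 * π / 4, 7 * π / 4} : Set ℝ))
    (hμ₁ : ((∃ k : ℕ, α + γ = k * π) ∧ μ₁ = π / 2) ∨
           (¬(∃ k : ℕ, α + γ = k * π) ∧ μ₁ = 3 * π / 2))
    (hν₁ : ((∃ k : ℕ, α + β = k * π) ∧ ν₁ = 0) ∨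
           (¬(∃ k : ℕ, α + β = k * π) ∧ ν₁ = π)) :
    ∀ j : Fin 8,
      deriv (fun t => meanPSF (Function.update ![α, β, γ, μ₁, ν₁, 0, 0, 0] j t))
        (![α, β, γ, μ₁, ν₁, 0, 0, 0] j) = 0 := by

  obtain ⟨a, ha⟩ := mirror_of_mem hα
  obtain ⟨b, hb⟩ := mirror_of_mem hβ
  obtain ⟨c, hc⟩ := mirror_of_mem hγ
  have ha0 : Mirror a α α := by simpa using ha 0
  have hb0 : Mirror b β β := by simpa using hb 0
  have hc0 : Mirror c γ γ := by simpa using hc 0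
  rw [add_eq_nat_mul_pi_iff (pos_of_mem hα) (pos_of_mem hγ) ha0 hc0] at hμ₁
  rw [add_eq_nat_mul_pi_iff (pos_of_mem hα) (pos_of_mem hβ) ha0 hb0] at hν₁
  have h3 : 3 * π / 2 = π / 2 + π := by ring
  have hμ : Real.cos μ₁ = 0 ∧ Real.sin μ₁ = -(a * c) := by
    rcases hμ₁ with ⟨h, rfl⟩ | ⟨h, rfl⟩
    · simp [h]
    · rw [h3]
      simp [mul_eq_one_of_sq ha0.sq hc0.sq h]
  have hν : Real.sin ν₁ = 0 ∧ Real.cos ν₁ = -(a * b) := by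
    rcases hν₁ with ⟨h, rfl⟩ | ⟨h, rfl⟩
    · simp [h]
    · simp [mul_eq_one_of_sq ha0.sq hb0.sq h]
  obtain ⟨hμc, hμs⟩ := hμ
  obtain ⟨hνs, hνc⟩ := hν
  intro j
  refine deriv_eq_zero_of_even fun s => ?_
  have hν' : Real.cos (ν₁ + s) = Real.cos (ν₁ - s) ∧ Real.sin (ν₁ + s) = -Real.sin (ν₁ - s) := by
    rw [Real.cos_add, Real.cos_sub, Real.sin_add, Real.sin_sub, hνs]
    constructor <;> ring
  fin_cases j
  · refine meanPSF_eq_of_zflip fun m n => ?_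
    change kern (α + s) β γ μ₁ 0 ν₁ 0 0 _ _ = kern (α - s) β γ μ₁ 0 ν₁ 0 0 m n
    simpa using kern_zflip (ha s) hb0 hc0 hμc hμs hνs hνc 0 0 0 m n
  · refine meanPSF_eq_of_zflip fun m n => ?_
    change kern α (β + s) γ μ₁ 0 ν₁ 0 0 _ _ = kern α (β - s) γ μ₁ 0 ν₁ 0 0 m n
    simpa using kern_zflip ha0 (hb s) hc0 hμc hμs hνs hνc 0 0 0 m n
  · refine meanPSF_eq_of_zflip fun m n => ?_
    change kern α β (γ + s) μ₁ 0 ν₁ 0 0 _ _ = kern α β (γ - s) μ₁ 0 ν₁ 0 0 m n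
    simpa using kern_zflip ha0 hb0 (hc s) hμc hμs hνs hνc 0 0 0 m n
  · refine meanPSF_eq_of_zflip fun m n => ?_
    change kern α β γ (μ₁ + s) 0 ν₁ 0 0 _ _ = kern α β γ (μ₁ - s) 0 ν₁ 0 0 m n
    simpa using kern_zflip ha0 hb0 hc0 hμc hμs hνs hνc s 0 0 m n
  · refine meanPSF_eq_of_zturn fun m n => ?_
    change kern α β γ μ₁ 0 (ν₁ + s) 0 0 _ _ = kern α β γ μ₁ 0 (ν₁ - s) 0 0 m n
    exact kern_zturn _ _ _ _ _ _ hν'.1 hν'.2 rfl (by simp) m n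
  · refine meanPSF_eq_of_zflip fun m n => ?_
    change kern α β γ μ₁ 0 ν₁ 0 (0 + s) _ _ = kern α β γ μ₁ 0 ν₁ 0 (0 - s) m n
    simpa using kern_zflip ha0 hb0 hc0 hμc hμs hνs hνc 0 0 s m n
  · refine meanPSF_eq_of_zflip fun m n => ?_
    change kern α β γ μ₁ (0 + s) ν₁ 0 0 _ _ = kern α β γ μ₁ (0 - s) ν₁ 0 0 m n
    simpa using kern_zflip ha0 hb0 hc0 hμc hμs hνs hνc 0 s 0 m n
  · refine meanPSF_eq_of_zturn fun m n => ?_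
    change kern α β γ μ₁ 0 ν₁ (0 + s) 0 _ _ = kern α β γ μ₁ 0 ν₁ (0 - s) 0 m n
    exact kern_zturn _ _ _ _ _ _ rfl (by simp [hνs]) (by simp) (by simp) m n

end
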